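/- arXiv:1904.08969 — 2 statements merged into one kernel-verified Lean document; each statement's English description precedes it below -/
import Mathlib

section
/- The following are equivalent: (1) ω₁ < 𝔟; (2) every K-analytic topological space in which every compact subset is at most countable is itself at most countable. -/
open Cardinal Set Topology

universe u

def FunctionallyHausdorff (X : Type u) [TopologicalSpace X] : Prop :=
  ∀ x y : X, x ≠ y → ∃ f : X → unitInterval, Continuous f ∧ f x = 0 ∧ f y = 1

def IsCechComplete (X : Type u) [TopologicalSpace X] : Prop :=
  ∃ (K : Type u) (_ : TopologicalSpace K) (e : X → K),
    CompactSpace K ∧ T2Space K ∧ IsEmbedding e ∧ DenseRange e ∧ IsGδ (Set.range e)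

noncomputable def lindelofNumber (X : Type u) [TopologicalSpace X] : Cardinal.{u} :=
  sInf {κ : Cardinal.{u} | ℵ₀ ≤ κ ∧ ∀ U : Set (Set X), (∀ u ∈ U, IsOpen u) → ⋃₀ U = Set.univ →
    ∃ V ⊆ U, #↥V ≤ κ ∧ ⋃₀ V = Set.univ}

noncomputable def pseudocharacter (X : Type u) [TopologicalSpace X] : Cardinal.{u} :=
  sInf {κ : Cardinal.{u} | ℵ₀ ≤ κ ∧ ∀ x : X, ∃ 𝒰 : Set (Set X),
    #↥𝒰 ≤ κ ∧ (∀ U ∈ 𝒰, IsOpen U ∧ x ∈ U) ∧ ⋂₀ 𝒰 = ⋂₀ {U : Set X | IsOpen U ∧ x ∈ U}}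

def IsScatteredSet {X : Type u} [TopologicalSpace X] (S : Set X) : Prop :=
  ∀ T ⊆ S, T.Nonempty → ∃ x ∈ T, ∃ U : Set X, IsOpen U ∧ U ∩ T = {x}

def IsKAnalytic (X : Type u) [TopologicalSpace X] : Prop :=
  ∃ (P : Type u) (_ : TopologicalSpace P) (f : P → X),
    LindelofSpace P ∧ IsCechComplete P ∧ Continuous f ∧ Function.Surjective f

def IsAnalyticSpace (X : Type u) [TopologicalSpace X] : Prop :=
  ∃ (P : Type u) (_ : TopologicalSpace P), PolishSpace P ∧
    ∃ f : P → X, Continuous f ∧ Function.Surjective f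

noncomputable def boundingNumber : Cardinal.{0} :=
  sInf {κ : Cardinal.{0} | ∃ B : Set (ℕ → ℕ), #↥B = κ ∧
    ∀ y : ℕ → ℕ, ∃ x ∈ B, {n : ℕ | ¬ x n ≤ y n}.Infinite}

/-!
A Lindelöf Čech-complete space, and hence every K-analytic space, has a compact resolution
`(C y)` indexed by `ℕ → ℕ`. If `ℵ₁ < 𝔟`, then any `ℵ₁` points `x i ∈ C (z i)` admit a single
`y` with `z i ≤* y`, so they are covered by the countably many compact sets `C (y + n)`; if
compact sets are countable, no such `ℵ₁` distinct points exist.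

If `𝔟 ≤ ℵ₁`, dominating the initial segments of an unbounded family of length `ω₁` yields an
uncountable family `g` with `{a | g a ≤ y}` countable for every `y`. The pairs `(y, a)` with
`g a ≤ y` or `a = ∞` form a closed subspace of the product of `ℕ → ℕ` with the one-point
compactification of the discrete index set. Its quotient onto the second factor is an
uncountable K-analytic space. A set `A` of indices on which `a ↦ g a n` is finite-to-one is
closed and discrete in this quotient, so on a compact subset every `a ↦ g a n` is bounded, and
compact subsets are countable.
-/

open Filter

universe v

section BoundingNumber

theorem exists_forall_eventuallyLE_cofinite {ι β : Type*} [Countable ι] [Preorder β]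
    [IsDirectedOrder β] [Nonempty β] (f : ι → ℕ → β) : ∃ y, ∀ i, f i ≤ᶠ[cofinite] y := by
  obtain ⟨e, he⟩ := exists_injective_nat ι
  have hbdd (n : ℕ) : BddAbove ((fun i => f i n) '' (e ⁻¹' Iic n)) :=
    (((finite_Iic n).preimage he.injOn).image _).bddAbove
  choose y hy using hbdd
  refine ⟨y, fun i => ?_⟩
  rw [Nat.cofinite_eq_atTop]
  filter_upwards [eventually_ge_atTop (e i)] with n hn
  exact hy n (mem_image_of_mem _ hn)

theorem exists_le_add_const_of_eventuallyLE {α β : Type*} [AddCommMonoid β] [PartialOrder β]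
    [CanonicallyOrderedAdd β] [IsDirectedOrder β] {x y : α → β} (h : x ≤ᶠ[cofinite] y) :
    ∃ M : β, ∀ a, x a ≤ y a + M := by
  obtain ⟨M, hM⟩ := ((eventually_cofinite.1 h).image x).bddAbove
  refine ⟨M, fun a => ?_⟩
  by_cases ha : x a ≤ y a
  · exact ha.trans le_self_add
  · exact (hM (mem_image_of_mem x ha)).trans le_add_self

theorem exists_countable_setOf_eventuallyLE {ι β : Type*} [LinearOrder ι] [Preorder β]
    [IsDirectedOrder β] [Nonempty β] (hι : ∀ a : ι, (Iic a).Countable) {f : ι → ℕ → β}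
    (hf : ∀ y, ∃ a, ¬ f a ≤ᶠ[cofinite] y) :
    ∃ g : ι → ℕ → β, ∀ y, {a | g a ≤ᶠ[cofinite] y}.Countable := by
  have hbound (a : ι) : ∃ y, ∀ b : Iic a, f b ≤ᶠ[cofinite] y :=
    have := (hι a).to_subtype
    exists_forall_eventuallyLE_cofinite _
  choose g hg using hbound
  refine ⟨g, fun y => ?_⟩
  obtain ⟨b, hb⟩ := hf y
  refine (hι b).mono fun a hay => ?_
  by_contra hab
  exact hb ((hg a ⟨b, (not_le.1 hab).le⟩).trans hay)

theorem lift_boundingNumber_le_mk {ι : Type u} {f : ι → ℕ → ℕ}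
    (hf : ∀ y, ∃ i, ¬ f i ≤ᶠ[cofinite] y) : lift.{u} boundingNumber ≤ #ι := by
  have hle : boundingNumber ≤ #(range f) := csInf_le' ⟨range f, rfl, fun y =>
    let ⟨i, hi⟩ := hf y; ⟨f i, mem_range_self i, hi⟩⟩
  simpa only [lift_uzero] using (lift_le.2 hle).trans mk_range_le_lift

theorem exists_mk_eq_boundingNumber :
    ∃ (ι : Type) (f : ι → ℕ → ℕ), #ι = boundingNumber ∧ ∀ y, ∃ i, ¬ f i ≤ᶠ[cofinite] y := by
  obtain ⟨B, hcard, hB⟩ :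
      ∃ B : Set (ℕ → ℕ), #B = boundingNumber ∧ ∀ y, ∃ x ∈ B, ¬ x ≤ᶠ[cofinite] y :=
    csInf_mem (s := {κ | ∃ B : Set (ℕ → ℕ), #B = κ ∧ ∀ y, ∃ x ∈ B, ¬ x ≤ᶠ[cofinite] y})
      ⟨_, univ, rfl, fun y => ⟨y + 1, mem_univ _, by simp [EventuallyLE, infinite_univ]⟩⟩
  exact ⟨B, Subtype.val, hcard, fun y => let ⟨x, hx, hxy⟩ := hB y; ⟨⟨x, hx⟩, hxy⟩⟩

theorem aleph0_lt_boundingNumber : ℵ₀ < boundingNumber := by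
  obtain ⟨ι, f, hcard, hf⟩ := exists_mk_eq_boundingNumber
  rw [← hcard, aleph0_lt_mk_iff, ← not_countable_iff]
  intro _
  obtain ⟨y, hy⟩ := exists_forall_eventuallyLE_cofinite f
  obtain ⟨i, hi⟩ := hf y
  exact hi (hy i)

theorem exists_linearOrder_countable_Iic {ι : Type u} (hι : #ι ≤ ℵ₁) :
    ∃ _ : LinearOrder ι, ∀ a : ι, (Iic a).Countable := by
  obtain ⟨_, _, hord⟩ := exists_ord_eq_type_lt ι
  refine ⟨inferInstance, fun a => ?_⟩
  have hIio : (Iio a).Countable := by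
    rw [← le_aleph0_iff_set_countable, ← lt_aleph_one_iff]
    exact (mk_Iio_lt a hord).trans_le hι
  exact Iio_insert (a := a) ▸ hIio.insert a

theorem exists_uncountable_family_of_boundingNumber_le (h : boundingNumber ≤ ℵ₁) :
    ∃ (ι : Type u) (g : ι → ℕ → ℕ), Uncountable ι ∧ ∀ y, {a | g a ≤ y}.Countable := by
  obtain ⟨ι, f, hcard, hf⟩ := exists_mk_eq_boundingNumber
  obtain ⟨_, hIic⟩ := exists_linearOrder_countable_Iic (hcard.trans_le h)
  obtain ⟨g, hg⟩ := exists_countable_setOf_eventuallyLE hIic hf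
  have : Uncountable ι := aleph0_lt_mk_iff.1 (hcard ▸ aleph0_lt_boundingNumber)
  refine ⟨ULift ι, g ∘ ULift.down, inferInstance, fun y => ?_⟩
  refine ((hg y).preimage ULift.down_injective).mono fun a hay => ?_
  exact (Eventually.of_forall hay : g a.down ≤ᶠ[cofinite] y)

end BoundingNumber

section CompactResolution

variable {X : Type u} {Y : Type v} [TopologicalSpace X] [TopologicalSpace Y]

/-- A compact resolution of `X`: a cover of `X` by compact sets `C y`, indexed by the functions
`y : ℕ → ℕ` and increasing in the pointwise order. -/
structure IsCompactResolution (C : (ℕ → ℕ) → Set X) : Prop where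
  monotone : Monotone C
  isCompact (y : ℕ → ℕ) : IsCompact (C y)
  exists_mem (x : X) : ∃ y, x ∈ C y

theorem IsCompactResolution.image {C : (ℕ → ℕ) → Set X} (hC : IsCompactResolution C) {f : X → Y}
    (hf : Continuous f) (hsurj : Function.Surjective f) :
    IsCompactResolution fun y => f '' C y where
  monotone := fun _ _ hyz => image_mono (hC.monotone hyz)
  isCompact := fun y => (hC.isCompact y).image hf
  exists_mem := hsurj.forall.2 fun x => (hC.exists_mem x).imp fun _ => mem_image_of_mem f

theorem exists_seq_isClosed_cover_of_isLindelof [RegularSpace X] {S U : Set X} (hS : IsLindelof S)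
    (hU : IsOpen U) (hSU : S ⊆ U) :
    ∃ D : ℕ → Set X, (∀ k, IsClosed (D k)) ∧ (∀ k, D k ⊆ U) ∧ S ⊆ ⋃ k, D k := by
  have hnhds (x : X) (hx : x ∈ S) := exists_mem_nhds_isClosed_subset (hU.mem_nhds (hSU hx))
  choose! C hCn hCc hCU using hnhds
  obtain ⟨t, ht, htS, hSt⟩ := hS.elim_nhds_subcover C hCn
  obtain ⟨D, hD⟩ := ((ht.image C).insert ∅).exists_eq_range (insert_nonempty _ _)
  have hDmem (k : ℕ) : D k = ∅ ∨ ∃ x ∈ t, C x = D k := by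
    have hk : D k ∈ insert ∅ (C '' t) := hD ▸ mem_range_self k
    exact hk
  refine ⟨D, fun k => ?_, fun k => ?_, fun x hx => ?_⟩
  · obtain hk | ⟨x, hx, hk⟩ := hDmem k
    · exact hk ▸ isClosed_empty
    · exact hk ▸ hCc x (htS x hx)
  · obtain hk | ⟨x, hx, hk⟩ := hDmem k
    · exact hk ▸ empty_subset U
    · exact hk ▸ hCU x (htS x hx)
  · obtain ⟨z, hz, hxz⟩ := mem_iUnion₂.1 (hSt hx)
    exact sUnion_range D ▸ hD ▸ mem_sUnion_of_mem hxz (mem_insert_of_mem _ (mem_image_of_mem C hz))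

theorem IsCechComplete.exists_isCompactResolution {P : Type*} [TopologicalSpace P]
    [LindelofSpace P] (hP : IsCechComplete P) :
    ∃ C : (ℕ → ℕ) → Set P, IsCompactResolution C := by
  obtain ⟨K, _, e, _, _, he, -, hG⟩ := hP
  obtain ⟨U, hUo, hU⟩ := isGδ_iff_eq_iInter_nat.1 hG
  choose D hDc hDU hD using fun n => exists_seq_isClosed_cover_of_isLindelof
    (isLindelof_range he.continuous) (hUo n) (hU.le.trans (iInter_subset U n))
  have hclosed (y : ℕ → ℕ) : IsClosed (⋂ n, accumulate (D n) (y n)) :=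
    isClosed_iInter fun n => (finite_Iic (y n)).isClosed_biUnion fun k _ => hDc n k
  have hrange (y : ℕ → ℕ) : ⋂ n, accumulate (D n) (y n) ⊆ range e :=
    hU ▸ iInter_mono fun n => iUnion₂_subset fun k _ => hDU n k
  refine ⟨fun y => e ⁻¹' ⋂ n, accumulate (D n) (y n), ?_, fun y => ?_, fun p => ?_⟩
  · exact fun y z hyz => preimage_mono (iInter_mono fun n => monotone_accumulate (hyz n))
  · exact he.isInducing.isCompact_preimage' (hclosed y).isCompact (hrange y)
  · choose y hy using fun n => mem_iUnion.1 (hD n (mem_range_self p))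
    exact ⟨y, mem_iInter.2 fun n => subset_accumulate (hy n)⟩

theorem IsKAnalytic.exists_isCompactResolution (hX : IsKAnalytic X) :
    ∃ C : (ℕ → ℕ) → Set X, IsCompactResolution C := by
  obtain ⟨P, _, f, _, hP, hf, hsurj⟩ := hX
  obtain ⟨C, hC⟩ := hP.exists_isCompactResolution
  exact ⟨_, hC.image hf hsurj⟩

theorem IsCompactResolution.exists_seq_isCompact_cover {C : (ℕ → ℕ) → Set X}
    (hC : IsCompactResolution C) {S : Set X} (hS : #S < lift.{u} boundingNumber) :
    ∃ K : ℕ → Set X, (∀ n, IsCompact (K n)) ∧ S ⊆ ⋃ n, K n := by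
  choose z hz using hC.exists_mem
  obtain ⟨y, hy⟩ : ∃ y, ∀ x : S, z x ≤ᶠ[cofinite] y := by
    by_contra! hz
    exact hS.not_ge (lift_boundingNumber_le_mk hz)
  refine ⟨fun n => C fun k => y k + n, fun n => hC.isCompact _, fun x hx => ?_⟩
  obtain ⟨n, hn⟩ := exists_le_add_const_of_eventuallyLE (hy ⟨x, hx⟩)
  exact mem_iUnion.2 ⟨n, hC.monotone hn (hz x)⟩

theorem IsCompactResolution.countable_of_aleph_one_lt_boundingNumber (h : ℵ₁ < boundingNumber)
    {C : (ℕ → ℕ) → Set X} (hC : IsCompactResolution C)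
    (hX : ∀ K : Set X, IsCompact K → K.Countable) : Countable X := by
  by_contra hunc
  rw [not_countable_iff] at hunc
  obtain ⟨S, hS⟩ := le_mk_iff_exists_set.1 (aleph_one_le_iff.2 (aleph0_lt_mk (α := X)))
  obtain ⟨K, hK, hSK⟩ := hC.exists_seq_isCompact_cover (hS.trans_lt (aleph_one_lt_lift.2 h))
  have hScount : S.Countable := (countable_iUnion fun n => hX _ (hK n)).mono hSK
  exact hS.not_lt (lt_aleph_one_iff.2 (le_aleph0_iff_set_countable.2 hScount))

end CompactResolution

section CechComplete

theorem isLindelof_preimage_of_isProperMap {X Y : Type*} [TopologicalSpace X] [TopologicalSpace Y]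
    {f : X → Y} (hf : IsProperMap f) {S : Set Y} (hS : IsLindelof S) : IsLindelof (f ⁻¹' S) := by
  intro F _ _ hFS
  obtain ⟨y, hy, hyF⟩ := hS (f := map f F) (map_le_iff_le_comap.2 (by simpa using hFS))
  obtain ⟨x, rfl, hx⟩ := hf.clusterPt_of_mapClusterPt hyF
  exact ⟨x, hy, hx⟩

theorem lindelofSpace_prod_of_compactSpace (X Y : Type*) [TopologicalSpace X] [TopologicalSpace Y]
    [LindelofSpace X] [CompactSpace Y] : LindelofSpace (X × Y) :=
  ⟨isLindelof_preimage_of_isProperMap isProperMap_fst_of_compactSpace isLindelof_univ⟩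

theorem isCechComplete_of_range_eq_inter {X K : Type u} [TopologicalSpace X] [TopologicalSpace K]
    [CompactSpace K] [T2Space K] {e : X → K} (he : IsEmbedding e) {F G : Set K} (hF : IsClosed F)
    (hG : IsGδ G) (hrange : range e = F ∩ G) : IsCechComplete X := by
  have hmem (x : X) : e x ∈ closure (range e) := subset_closure (mem_range_self x)
  have hclosure : closure (range e) ⊆ F :=
    closure_minimal (hrange.trans_subset inter_subset_left) hF
  have hrange' : range (codRestrict e _ hmem) = Subtype.val ⁻¹' G := by
    ext z
    simpa [Subtype.ext_iff, hclosure z.2] using Set.ext_iff.1 hrange z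
  refine ⟨closure (range e), inferInstance, codRestrict e _ hmem,
    isCompact_iff_compactSpace.1 isClosed_closure.isCompact, inferInstance,
    he.codRestrict _ hmem, Subtype.dense_iff.2 ?_, ?_⟩
  · rw [← range_comp]
    exact Subset.rfl
  · exact hrange' ▸ hG.preimage continuous_subtype_val

theorem isCechComplete_of_locallyCompactSpace (X : Type u) [TopologicalSpace X]
    [LocallyCompactSpace X] [T2Space X] : IsCechComplete X :=
  isCechComplete_of_range_eq_inter OnePoint.isOpenEmbedding_coe.isEmbedding isClosed_univ
    OnePoint.isOpen_range_coe.isGδ (univ_inter _).symm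

theorem IsCechComplete.of_isClosed {X : Type u} [TopologicalSpace X] (hX : IsCechComplete X)
    {S : Set X} (hS : IsClosed S) : IsCechComplete S := by
  obtain ⟨K, _, e, _, _, he, -, hG⟩ := hX
  refine isCechComplete_of_range_eq_inter (he.comp .subtypeVal) isClosed_closure hG
    (F := closure (e '' S)) ?_
  rw [range_comp, Subtype.range_coe, ← image_preimage_eq_inter_range,
    ← he.closure_eq_preimage_closure_image, hS.closure_eq]

theorem IsCechComplete.prod {X : Type u} {Y : Type v} [TopologicalSpace X] [TopologicalSpace Y]
    (hX : IsCechComplete X) (hY : IsCechComplete Y) : IsCechComplete (X × Y) := by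
  obtain ⟨K, _, e, _, _, he, hed, heG⟩ := hX
  obtain ⟨L, _, j, _, _, hj, hjd, hjG⟩ := hY
  refine ⟨K × L, inferInstance, Prod.map e j, inferInstance, inferInstance, he.prodMap hj,
    hed.prodMap hjd, ?_⟩
  rw [range_prodMap, Set.prod_eq]
  exact (heG.preimage continuous_fst).inter (hjG.preimage continuous_snd)

theorem IsCechComplete.pi {ι : Type v} [Countable ι] {X : ι → Type u}
    [∀ i, TopologicalSpace (X i)] (hX : ∀ i, IsCechComplete (X i)) :
    IsCechComplete (∀ i, X i) := by
  choose K _ e _ _ he hed heG using hX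
  refine ⟨∀ i, K i, inferInstance, Pi.map e, inferInstance, inferInstance, .piMap he,
    .piMap hed, ?_⟩
  rw [range_piMap, pi_def]
  exact .biInter (to_countable _) fun i _ => (heG i).preimage (continuous_apply i)

end CechComplete

section DominatedQuotient

variable {ι : Type u}

/-- The pairs `(y, a)` with `g a ≤ y`, together with all pairs `(y, ∞)`. -/
def dominatedPairs (g : ι → ℕ → ℕ) : Set ((ℕ → ℕ) × OnePoint ι) :=
  {z | ∀ a : ι, z.2 = a → g a ≤ z.1}

theorem isOpen_singleton_coe_onePoint [TopologicalSpace ι] [DiscreteTopology ι] (a : ι) :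
    IsOpen {(a : OnePoint ι)} := by
  rw [← image_singleton, OnePoint.isOpen_image_coe]
  exact isOpen_discrete _

theorem isClosed_dominatedPairs [TopologicalSpace ι] [DiscreteTopology ι] (g : ι → ℕ → ℕ) :
    IsClosed (dominatedPairs g) := by
  simp only [dominatedPairs, ofPred_forall]
  exact isClosed_iInter fun a =>
    isClosed_imp ((isOpen_singleton_coe_onePoint a).preimage continuous_snd)
      (isClosed_le continuous_const continuous_fst)

/-- The set `ι ∪ {∞}` carrying the quotient topology from `dominatedPairs g` rather than that of
the one-point compactification: this is the counterexample when `g` witnesses `𝔟 ≤ ℵ₁`. -/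
def DominatedQuotient (_g : ι → ℕ → ℕ) : Type u := OnePoint ι

namespace DominatedQuotient

/-- The quotient map onto `DominatedQuotient g`, which forgets the dominating function. -/
def proj (g : ι → ℕ → ℕ) (p : dominatedPairs g) : DominatedQuotient g := p.1.2

/-- The inclusion of `ι` as the set of points of `DominatedQuotient g` other than `∞`. -/
def of (g : ι → ℕ → ℕ) (a : ι) : DominatedQuotient g := (a : OnePoint ι)

theorem of_injective (g : ι → ℕ → ℕ) : Function.Injective (of g) := OnePoint.coe_injective

theorem proj_surjective (g : ι → ℕ → ℕ) : Function.Surjective (proj g) := by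
  intro x
  induction x using OnePoint.rec with
  | infty => exact ⟨⟨(0, OnePoint.infty), fun a ha => (OnePoint.infty_ne_coe a ha).elim⟩, rfl⟩
  | coe a => exact ⟨⟨(g a, a), fun b hb => (congrArg g (OnePoint.coe_injective hb)).ge⟩, rfl⟩

theorem countable_of_preimage_of {g : ι → ℕ → ℕ} {K : Set (DominatedQuotient g)}
    (hK : (of g ⁻¹' K).Countable) : K.Countable := by
  refine ((hK.image (of g)).insert (OnePoint.infty : OnePoint ι)).mono fun x hx => ?_
  induction x using OnePoint.rec with
  | infty => exact mem_insert _ _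
  | coe a => exact mem_insert_of_mem _ (mem_image_of_mem _ hx)

variable [TopologicalSpace ι]

instance (g : ι → ℕ → ℕ) : TopologicalSpace (DominatedQuotient g) :=
  .coinduced (proj g) inferInstance

variable [DiscreteTopology ι]

theorem isKAnalytic (g : ι → ℕ → ℕ) : IsKAnalytic (DominatedQuotient g) := by
  have := lindelofSpace_prod_of_compactSpace (ℕ → ℕ) (OnePoint ι)
  have hprod : IsCechComplete ((ℕ → ℕ) × OnePoint ι) :=
    .prod (.pi fun _ => isCechComplete_of_locallyCompactSpace ℕ)
      (isCechComplete_of_locallyCompactSpace _)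
  have hclosed := isClosed_dominatedPairs g
  exact ⟨dominatedPairs g, inferInstance, proj g,
    isLindelof_iff_lindelofSpace.1 hclosed.isLindelof, hprod.of_isClosed hclosed,
    continuous_coinduced_rng, proj_surjective g⟩

theorem isOpenEmbedding_of (g : ι → ℕ → ℕ) : IsOpenEmbedding (of g) := by
  refine .of_continuous_injective_isOpenMap continuous_of_discreteTopology (of_injective g)
    fun A _ => ?_
  have hpre : proj g ⁻¹' (of g '' A) = (fun p => p.1.2) ⁻¹' ((↑) '' A : Set (OnePoint ι)) := rfl
  rw [isOpen_coinduced, hpre]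
  exact (OnePoint.isOpen_image_coe.2 (isOpen_discrete A)).preimage (by fun_prop)

theorem isClosed_image_of (g : ι → ℕ → ℕ) {A : Set ι} {n : ℕ}
    (hA : ∀ k, {a ∈ A | g a n ≤ k}.Finite) : IsClosed (of g '' A) := by
  have hpre : proj g ⁻¹' (of g '' A) = {p | ∀ k, p.1.1 n = k →
      p.1.2 ∈ ((↑) '' {a ∈ A | g a n ≤ k} : Set (OnePoint ι))} := by
    ext p
    constructor
    · rintro ⟨a, ha, hap⟩ k rfl
      exact ⟨a, ⟨ha, p.2 a hap.symm n⟩, hap⟩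
    · intro h
      obtain ⟨a, ha, hap⟩ := h _ rfl
      exact ⟨a, ha.1, hap⟩
  rw [isClosed_coinduced, hpre]
  simp only [ofPred_forall]
  exact isClosed_iInter fun k => isClosed_imp
    ((isOpen_discrete {k}).preimage (by fun_prop : Continuous fun p : dominatedPairs g => p.1.1 n))
    (((hA k).image _).isClosed.preimage (by fun_prop))

theorem bddAbove_of_isCompact (g : ι → ℕ → ℕ) {K : Set (DominatedQuotient g)} (hK : IsCompact K)
    (n : ℕ) : BddAbove ((fun a => g a n) '' (of g ⁻¹' K)) := by
  obtain ⟨A, hAK, hA⟩ := exists_subset_bijOn (of g ⁻¹' K) fun a => g a n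
  have hfib (k : ℕ) : {a ∈ A | g a n ≤ k}.Finite :=
    (finite_Iic k).of_injOn (fun _ ha => ha.2) (hA.injOn.mono fun _ ha => ha.1)
  have hcompact : IsCompact (of g '' A) :=
    hK.of_isClosed_subset (isClosed_image_of g hfib) (image_subset_iff.2 hAK)
  have hfin : A.Finite :=
    ((isOpenEmbedding_of g).isInducing.isCompact_iff.2 hcompact).finite_of_discrete
  exact hA.image_eq ▸ (hfin.image _).bddAbove

theorem countable_of_isCompact {g : ι → ℕ → ℕ} (hg : ∀ y, {a | g a ≤ y}.Countable)
    {K : Set (DominatedQuotient g)} (hK : IsCompact K) : K.Countable := by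
  choose y hy using bddAbove_of_isCompact g hK
  exact countable_of_preimage_of ((hg y).mono fun a ha n => hy n (mem_image_of_mem _ ha))

end DominatedQuotient

theorem exists_uncountable_isKAnalytic_of_boundingNumber_le (h : boundingNumber ≤ ℵ₁) :
    ∃ (X : Type u) (_ : TopologicalSpace X), IsKAnalytic X ∧
      (∀ K : Set X, IsCompact K → K.Countable) ∧ Uncountable X := by
  obtain ⟨ι, g, _, hg⟩ := exists_uncountable_family_of_boundingNumber_le.{u} h
  let _ : TopologicalSpace ι := ⊥
  have : DiscreteTopology ι := ⟨rfl⟩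
  exact ⟨DominatedQuotient g, inferInstance, DominatedQuotient.isKAnalytic g,
    fun _ => DominatedQuotient.countable_of_isCompact hg,
    (DominatedQuotient.of_injective g).uncountable⟩

end DominatedQuotient

theorem stmt10 :
    Cardinal.aleph 1 < boundingNumber ↔
      ∀ (X : Type u) (_ : TopologicalSpace X), IsKAnalytic X →
        (∀ K : Set X, IsCompact K → K.Countable) → Countable X := by
  refine ⟨fun h X _ hX hK => ?_, fun h => ?_⟩
  · obtain ⟨C, hC⟩ := hX.exists_isCompactResolution
    exact hC.countable_of_aleph_one_lt_boundingNumber h hK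
  · by_contra! hb
    obtain ⟨X, _, hX, hK, hunc⟩ := exists_uncountable_isKAnalytic_of_boundingNumber_le.{u} hb
    exact not_countable (h X _ hX hK)
end

section
/- The following are equivalent: (1) ω₁ < 𝔟; (2) every K-analytic Hausdorff topological space in which every compact subset is metrizable is analytic. -/
open Cardinal Set Topology

universe u

/-!
A K-analytic space is a continuous image of a closed `Q ⊆ (ℕ → ℕ) × K` with `K` compact, and `Q`
projects properly to `ℕ → ℕ`. A subset of `ℕ → ℕ` of size less than `𝔟` lies in a σ-compact set,
hence so does a subset of that size of a K-analytic space `X`.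

If `ℵ₁ < 𝔟` and compact subsets of `X` are metrizable, then each set of at most `ℵ₁` points of
`X × X` lies in a continuous image of a second countable space. As a failure of the Lindelöf
property is always witnessed by `ℵ₁` points, `X × X` is hereditarily Lindelöf. So countably many
pairs `(U s, V s)` of disjoint open sets separate the points of `X`. Recording for each `s` that the
image of a point of `Q` avoids `U s`, or that it avoids `V s`, gives a closed subset of
`Q × (S → Bool)`. Its projection to `(ℕ → ℕ) × (S → Bool)` is proper and determines the point of
`X`, so `X` is a continuous image of the closed range of that projection, which is Polish.

If `𝔟 ≤ ℵ₁`, there are uncountably many `x i : ℕ → ℕ` such that every `y` bounds only countably many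
of them. Add to the discrete space of indices a point whose neighbourhoods are the sets outside
which `x` is locally finite. This space is K-analytic, and the sequences along a compact set are
bounded, so compact sets are countable and metrizable. It has uncountably many isolated points, so
it is not analytic.
-/

open Filter

/-! ### Uncountable well-orders with countable initial segments -/

theorem exists_linearOrder_mk_eq_aleph_one :
    ∃ (Ω : Type u) (_ : LinearOrder Ω), WellFoundedLT Ω ∧ #Ω = ℵ₁ ∧ ∀ a : Ω, (Iio a).Countable := by
  refine ⟨(ℵ₁ : Cardinal.{u}).ord.ToType, inferInstance, inferInstance, mk_ord_toType _,
    fun a => ?_⟩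
  have h : #(Iio a) < #(ℵ₁ : Cardinal.{u}).ord.ToType := mk_Iio_lt a (by simp)
  rwa [mk_ord_toType, lt_aleph_one_iff, le_aleph0_iff_set_countable] at h

section CountableInitialSegments

variable {Ω : Type*} [LinearOrder Ω]

theorem exists_mem_forall_lt_of_not_countable (hΩ : ∀ a : Ω, (Iio a).Countable) {A C : Set Ω}
    (hA : ¬ A.Countable) (hC : C.Countable) : ∃ a ∈ A, ∀ c ∈ C, c < a := by
  by_contra! h
  refine hA ((hC.biUnion fun c _ => (hΩ c).insert c).mono fun a ha => ?_)
  obtain ⟨c, hc, hac⟩ := h a ha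
  exact mem_biUnion hc hac.eq_or_lt

theorem exists_forall_lt_rel_of_forall_countable [WellFoundedLT Ω]
    (hΩ : ∀ a : Ω, (Iio a).Countable) {α : Type*} {r : α → α → Prop}
    (hr : ∀ C : Set α, C.Countable → ∃ y, ∀ x ∈ C, r x y) :
    ∃ f : Ω → α, ∀ a b, a < b → r (f a) (f b) := by
  have hr' : ∀ (b : Ω) (g : Iio b → α), ∃ y, ∀ a, r (g a) y := fun b g => by
    have := (hΩ b).to_subtype
    exact (hr (range g) (countable_range g)).imp fun y hy a => hy _ (mem_range_self a)
  choose next hnext using hr'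
  let f : Ω → α := (wellFounded_lt (α := Ω)).fix fun b ih => next b fun a => ih a a.2
  have hf : ∀ b, f b = next b fun a => f a := (wellFounded_lt (α := Ω)).fix_eq _
  refine ⟨f, fun a b hab => ?_⟩
  rw [hf b]
  exact hnext b (fun a => f a) ⟨a, hab⟩

end CountableInitialSegments

/-! ### Eventual domination and the bounding number -/

theorem exists_eventuallyLE_of_countable {S : Set (ℕ → ℕ)} (hS : S.Countable) :
    ∃ y : ℕ → ℕ, ∀ x ∈ S, x ≤ᶠ[cofinite] y := by
  obtain rfl | hne := S.eq_empty_or_nonempty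
  · exact ⟨0, by simp⟩
  obtain ⟨g, rfl⟩ := hS.exists_eq_range hne
  refine ⟨fun n => (Finset.range (n + 1)).sup fun k => g k n, ?_⟩
  rintro _ ⟨k, rfl⟩
  rw [Nat.cofinite_eq_atTop]
  filter_upwards [eventually_ge_atTop k] with n hn
  exact Finset.le_sup (f := fun k => g k n) (Finset.mem_range.2 (Nat.lt_succ_of_le hn))

theorem exists_le_add_of_eventuallyLE_cofinite {ι : Type*} {x y : ι → ℕ}
    (h : x ≤ᶠ[cofinite] y) : ∃ m : ℕ, x ≤ fun n => y n + m := by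
  obtain ⟨m, hm⟩ := ((eventually_cofinite.1 h).image x).bddAbove
  refine ⟨m, fun n => ?_⟩
  by_cases hn : x n ≤ y n
  · exact hn.trans (Nat.le_add_right _ _)
  · exact (hm (mem_image_of_mem x hn)).trans (Nat.le_add_left _ _)

theorem exists_eventuallyLE_of_mk_lt_boundingNumber {A : Set (ℕ → ℕ)}
    (hA : #A < boundingNumber) : ∃ y : ℕ → ℕ, ∀ x ∈ A, x ≤ᶠ[cofinite] y := by
  by_contra! h
  exact hA.not_ge (csInf_le' ⟨A, rfl, h⟩)

theorem exists_unbounded_mk_eq_boundingNumber :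
    ∃ B : Set (ℕ → ℕ), #B = boundingNumber ∧ ∀ y : ℕ → ℕ, ∃ x ∈ B, ¬ x ≤ᶠ[cofinite] y :=
  csInf_mem (s := {κ : Cardinal.{0} | ∃ B : Set (ℕ → ℕ), #B = κ ∧
    ∀ y : ℕ → ℕ, ∃ x ∈ B, {n : ℕ | ¬ x n ≤ y n}.Infinite})
    ⟨_, univ, rfl, fun y => ⟨y + 1, mem_univ _, by simpa using infinite_univ⟩⟩

theorem exists_isSigmaCompact_superset_of_mk_lt_boundingNumber {A : Set (ℕ → ℕ)}
    (hA : #A < boundingNumber) : ∃ T, IsSigmaCompact T ∧ A ⊆ T := by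
  obtain ⟨y, hy⟩ := exists_eventuallyLE_of_mk_lt_boundingNumber hA
  refine ⟨⋃ m : ℕ, Icc 0 fun n => y n + m,
    isSigmaCompact_iUnion_of_isCompact _ fun _ => isCompact_Icc, fun x hx => ?_⟩
  obtain ⟨m, hm⟩ := exists_le_add_of_eventuallyLE_cofinite (hy x hx)
  exact mem_iUnion.2 ⟨m, fun _ => Nat.zero_le _, hm⟩

theorem exists_uncountable_forall_countable_setOf_le (h : boundingNumber ≤ ℵ₁) :
    ∃ (I : Type u) (x : I → ℕ → ℕ), Uncountable I ∧ ∀ y, {i | x i ≤ y}.Countable := by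
  obtain ⟨Ω, _, _, hcard, hΩ⟩ := exists_linearOrder_mk_eq_aleph_one.{u}
  have hunc : Uncountable Ω := aleph0_lt_mk_iff.1 (hcard ▸ aleph0_lt_aleph_one)
  obtain ⟨B, hB, hunb⟩ := exists_unbounded_mk_eq_boundingNumber
  have : Nonempty B := let ⟨x, hx, _⟩ := hunb 0; ⟨⟨x, hx⟩⟩
  obtain ⟨j⟩ : Nonempty (B ↪ Ω) := lift_mk_le'.1 (by simpa [hB, hcard] using h)
  let b : Ω → B := Function.invFun j
  have hb : Function.Surjective b := Function.invFun_surjective j.injective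
  have hdom : ∀ a, ∃ y : ℕ → ℕ, ∀ c ≤ a, (b c : ℕ → ℕ) ≤ᶠ[cofinite] y := fun a => by
    have hIic : (Iic a).Countable := by simpa only [Iio_insert] using (hΩ a).insert a
    simpa using exists_eventuallyLE_of_countable (hIic.image fun c => (b c : ℕ → ℕ))
  choose x hx using hdom
  refine ⟨Ω, x, hunc, fun y => ?_⟩
  by_contra hy
  obtain ⟨z, hz, hzy⟩ := hunb y
  obtain ⟨c, hc⟩ := hb ⟨z, hz⟩
  obtain ⟨a, hay, hca⟩ :=
    exists_mem_forall_lt_of_not_countable hΩ hy (countable_singleton c)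
  have hbx : (b c : ℕ → ℕ) ≤ᶠ[cofinite] x a := hx a c (hca c rfl).le
  rw [hc] at hbx
  exact hzy (hbx.trans (Eventually.of_forall hay))

/-! ### Lindelöf sets -/

theorem isLindelof_of_forall_subset_mk_le_aleph_one {Y : Type u} [TopologicalSpace Y] {s : Set Y}
    (h : ∀ t ⊆ s, #t ≤ ℵ₁ → IsLindelof t) : IsLindelof s := by
  refine isLindelof_of_countable_subcover fun {ι} U hU hsU => ?_
  by_contra! hcov
  choose i hi using fun p : s => mem_iUnion.1 (hsU p.2)
  obtain ⟨Ω, _, _, hcard, hΩ⟩ := exists_linearOrder_mk_eq_aleph_one.{u}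
  have : Uncountable Ω := aleph0_lt_mk_iff.1 (hcard ▸ aleph0_lt_aleph_one)
  obtain ⟨f, hf⟩ : ∃ f : Ω → s, ∀ a b, a < b → (f b : Y) ∉ U (i (f a)) := by
    refine exists_forall_lt_rel_of_forall_countable hΩ
      (r := fun p q : s => (q : Y) ∉ U (i p)) fun C hC => ?_
    obtain ⟨q, hq, hqU⟩ := not_subset.1 (hcov (i '' C) (hC.image i))
    exact ⟨⟨q, hq⟩, fun p hp hpU => hqU (mem_biUnion (mem_image_of_mem i hp) hpU)⟩
  have hrange : IsLindelof (range fun a => (f a : Y)) :=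
    h _ (range_subset_iff.2 fun a => (f a).2) (hcard ▸ mk_range_le)
  obtain ⟨C, hC, hCcov⟩ := hrange.elim_countable_subcover (fun a => U (i (f a)))
    (fun a => hU _) (range_subset_iff.2 fun a => mem_iUnion.2 ⟨a, hi (f a)⟩)
  obtain ⟨b, -, hb⟩ := exists_mem_forall_lt_of_not_countable hΩ not_countable_univ hC
  obtain ⟨a, ha, hab⟩ := mem_iUnion₂.1 (hCcov (mem_range_self b))
  exact hf a b (hb a ha) hab

theorem isHereditarilyLindelof_range {Y Z : Type*} [TopologicalSpace Y] [TopologicalSpace Z]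
    [HereditarilyLindelofSpace Y] {f : Y → Z} (hf : Continuous f) :
    IsHereditarilyLindelof (range f) := fun t ht => by
  rw [← image_preimage_eq_of_subset ht]
  exact (HereditarilyLindelofSpace.isLindelof (f ⁻¹' t)).image hf

theorem lindelofSpace_of_isClosedMap {Y Z : Type*} [TopologicalSpace Y] [TopologicalSpace Z]
    [LindelofSpace Z] {f : Y → Z} (hf : IsClosedMap f) (hfib : ∀ z, IsLindelof (f ⁻¹' {z})) :
    LindelofSpace Y := by
  refine ⟨isLindelof_of_countable_subcover fun {ι} U hU hcov => ?_⟩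
  choose t ht htcov using fun z =>
    (hfib z).elim_countable_subcover U hU ((subset_univ _).trans hcov)
  have htube : ∀ z, (f '' (⋃ i ∈ t z, U i)ᶜ)ᶜ ∈ 𝓝 z := fun z => by
    refine (hf _ (isOpen_biUnion fun i _ => hU i).isClosed_compl).isOpen_compl.mem_nhds ?_
    rintro ⟨y, hy, rfl⟩
    exact hy (htcov (f y) rfl)
  obtain ⟨c, hc, hcu⟩ := countable_cover_nhds htube
  refine ⟨⋃ z ∈ c, t z, hc.biUnion fun z _ => ht z, fun y _ => ?_⟩
  obtain ⟨z, hz, hyz⟩ := mem_iUnion₂.1 (hcu ▸ mem_univ (f y))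
  have hy : y ∈ ⋃ i ∈ t z, U i := by_contra fun hy => hyz ⟨y, hy, rfl⟩
  exact biUnion_subset_biUnion_left (subset_biUnion_of_mem (u := t) hz) hy

theorem isSigmaCompact_preimage_of_isProperMap {Y Z : Type*} [TopologicalSpace Y]
    [TopologicalSpace Z] {f : Y → Z} (hf : IsProperMap f) {T : Set Z} (hT : IsSigmaCompact T) :
    IsSigmaCompact (f ⁻¹' T) := by
  obtain ⟨C, hC, rfl⟩ := hT
  rw [preimage_iUnion]
  exact isSigmaCompact_iUnion_of_isCompact _ fun m => hf.isCompact_preimage (hC m)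

section MetrizableCompacts

variable {X : Type u} [TopologicalSpace X]

theorem exists_secondCountable_range_eq_of_isSigmaCompact
    (hX : ∀ K : Set X, IsCompact K → TopologicalSpace.MetrizableSpace K)
    {T : Set X} (hT : IsSigmaCompact T) :
    ∃ (M : Type u) (_ : TopologicalSpace M) (f : M → X),
      SecondCountableTopology M ∧ Continuous f ∧ range f = T := by
  obtain ⟨C, hC, rfl⟩ := hT
  have : ∀ m, SecondCountableTopology (C m) := fun m => by
    have := hX (C m) (hC m)
    have := isCompact_iff_compactSpace.1 (hC m)
    let _ := TopologicalSpace.metrizableSpaceMetric (C m)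
    infer_instance
  refine ⟨Σ m, C m, inferInstance, fun p => p.2, inferInstance,
    continuous_sigma fun m => continuous_subtype_val, ?_⟩
  simp [range_sigma_eq_iUnion_range]

theorem isHereditarilyLindelof_prod_of_isSigmaCompact
    (hX : ∀ K : Set X, IsCompact K → TopologicalSpace.MetrizableSpace K)
    {S T : Set X} (hS : IsSigmaCompact S) (hT : IsSigmaCompact T) :
    IsHereditarilyLindelof (S ×ˢ T) := by
  obtain ⟨M, _, f, _, hf, rfl⟩ := exists_secondCountable_range_eq_of_isSigmaCompact hX hS
  obtain ⟨N, _, g, _, hg, rfl⟩ := exists_secondCountable_range_eq_of_isSigmaCompact hX hT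
  rw [← range_prodMap]
  exact isHereditarilyLindelof_range (hf.prodMap hg)

theorem hereditarilyLindelofSpace_prod_self
    (hX : ∀ K : Set X, IsCompact K → TopologicalSpace.MetrizableSpace K)
    (hcov : ∀ A : Set X, #A ≤ ℵ₁ → ∃ T, IsSigmaCompact T ∧ A ⊆ T) :
    HereditarilyLindelofSpace (X × X) := by
  refine .of_forall_isOpen fun s _ => isLindelof_of_forall_subset_mk_le_aleph_one fun A _ hA => ?_
  obtain ⟨S, hS, hAS⟩ := hcov (Prod.fst '' A) (mk_image_le.trans hA)
  obtain ⟨T, hT, hAT⟩ := hcov (Prod.snd '' A) (mk_image_le.trans hA)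
  exact (isHereditarilyLindelof_prod_of_isSigmaCompact hX hS hT).isLindelof_subset
    fun p hp => ⟨hAS (mem_image_of_mem _ hp), hAT (mem_image_of_mem _ hp)⟩

end MetrizableCompacts

/-! ### K-analytic spaces as images of closed subsets of `(ℕ → ℕ) × K` -/

theorem exists_isClosed_cover_of_isLindelof {K : Type*} [TopologicalSpace K] [RegularSpace K]
    {G U : Set K} (hG : IsLindelof G) (hU : IsOpen U) (hGU : G ⊆ U) :
    ∃ F : ℕ → Set K, (∀ i, IsClosed (F i) ∧ F i ⊆ U) ∧ G ⊆ ⋃ i, F i := by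
  have hreg : ∀ k, ∃ F : Set K, (IsClosed F ∧ F ⊆ U) ∧ (k ∈ G → F ∈ 𝓝 k) := fun k => by
    by_cases hk : k ∈ G
    · obtain ⟨F, hF, hFc, hFU⟩ := exists_mem_nhds_isClosed_subset (hU.mem_nhds (hGU hk))
      exact ⟨F, ⟨hFc, hFU⟩, fun _ => hF⟩
    · exact ⟨∅, ⟨isClosed_empty, empty_subset U⟩, fun h => (hk h).elim⟩
  choose F hF hFk using hreg
  obtain ⟨t, ht, -, hGt⟩ := hG.elim_nhds_subcover F hFk
  obtain ⟨g, hg⟩ := ((ht.image F).insert ∅).exists_eq_range (insert_nonempty _ _)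
  refine ⟨g, fun i => ?_, ?_⟩
  · obtain h | ⟨k, -, h⟩ : g i ∈ insert ∅ (F '' t) := hg ▸ mem_range_self i
    · exact h ▸ ⟨isClosed_empty, empty_subset U⟩
    · exact h ▸ hF k
  · rw [← sUnion_range, ← hg, sUnion_insert, empty_union, sUnion_image]
    exact hGt

theorem exists_isClosed_image_snd_eq_of_isGδ {K : Type*} [TopologicalSpace K] [RegularSpace K]
    {G : Set K} (hG : IsGδ G) (hL : IsLindelof G) :
    ∃ Q : Set ((ℕ → ℕ) × K), IsClosed Q ∧ Prod.snd '' Q = G := by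
  obtain ⟨U, hU, rfl⟩ := isGδ_iff_eq_iInter_nat.1 hG
  choose F hF hGF using fun n =>
    exists_isClosed_cover_of_isLindelof hL (hU n) (iInter_subset U n)
  refine ⟨{z | ∀ n i, z.1 n = i → z.2 ∈ F n i}, ?_, Subset.antisymm ?_ fun k hk => ?_⟩
  · simp only [ofPred_forall]
    refine isClosed_iInter fun n => isClosed_iInter fun i => isClosed_imp ?_ ?_
    · exact (isOpen_discrete ({i} : Set ℕ)).preimage
        (show Continuous fun z : (ℕ → ℕ) × K => z.1 n by fun_prop)
    · exact (hF n i).1.preimage continuous_snd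
  · rintro _ ⟨z, hz, rfl⟩
    exact mem_iInter.2 fun n => (hF n _).2 (hz n _ rfl)
  · choose s hs using fun n => mem_iUnion.1 (hGF n hk)
    exact ⟨(s, k), fun n i hi => hi ▸ hs n, rfl⟩

theorem IsCechComplete.of_isClosedEmbedding {P Y : Type u} [TopologicalSpace P]
    [TopologicalSpace Y] (hY : IsCechComplete Y) {g : P → Y} (hg : IsClosedEmbedding g) :
    IsCechComplete P := by
  obtain ⟨K, _, e, _, _, he, -, hG⟩ := hY
  let C := closure (range (e ∘ g))
  have hC : ∀ p, e (g p) ∈ C := fun p => subset_closure (mem_range_self p)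
  have : CompactSpace C := isCompact_iff_compactSpace.1 isClosed_closure.isCompact
  have hCe : C ∩ range e ⊆ range (e ∘ g) := by
    rintro _ ⟨hy, y, rfl⟩
    have : y ∈ closure (range g) := by
      rwa [he.closure_eq_preimage_closure_image, ← range_comp]
    obtain ⟨p, rfl⟩ := hg.isClosed_range.closure_subset this
    exact mem_range_self p
  have hrange : range (codRestrict (e ∘ g) C hC) = Subtype.val ⁻¹' range e := by
    refine Subset.antisymm (range_subset_iff.2 fun p => mem_range_self (g p)) fun k hk => ?_
    obtain ⟨p, hp⟩ := hCe ⟨k.2, hk⟩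
    exact ⟨p, Subtype.ext hp⟩
  refine ⟨C, inferInstance, codRestrict (e ∘ g) C hC, inferInstance, inferInstance,
    (he.comp hg.isEmbedding).codRestrict C hC, ?_, ?_⟩
  · rintro ⟨k, hk⟩
    rwa [closure_subtype, ← range_comp]
  · rw [hrange]
    exact hG.preimage continuous_subtype_val

theorem isCechComplete_baire_prod (K : Type u) [TopologicalSpace K] [CompactSpace K] [T2Space K] :
    IsCechComplete ((ℕ → ℕ) × K) := by
  let c : (ℕ → ℕ) → ℕ → OnePoint ℕ := Pi.map fun _ => (↑)
  have hc : IsEmbedding c := .piMap fun _ => OnePoint.isOpenEmbedding_coe.isEmbedding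
  have hcd : DenseRange c := .piMap fun _ => OnePoint.denseRange_coe
  have hcG : IsGδ (range c) := by
    rw [range_piMap, pi_def, biInter_univ]
    exact .iInter_of_isOpen fun n =>
      OnePoint.isOpenEmbedding_coe.isOpen_range.preimage (continuous_apply n)
  refine ⟨(ℕ → OnePoint ℕ) × K, inferInstance, Prod.map c id, inferInstance, inferInstance,
    hc.prodMap .id, hcd.prodMap denseRange_id, ?_⟩
  rw [range_prodMap, range_id, prod_univ]
  exact hcG.preimage continuous_fst

theorem isKAnalytic_iff_exists_isClosed {X : Type u} [TopologicalSpace X] :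
    IsKAnalytic X ↔ ∃ (K : Type u) (_ : TopologicalSpace K) (Q : Set ((ℕ → ℕ) × K)) (f : Q → X),
      CompactSpace K ∧ T2Space K ∧ IsClosed Q ∧ Continuous f ∧ Function.Surjective f := by
  constructor
  · rintro ⟨P, _, f, _, ⟨K, _, e, _, _, he, -, hG⟩, hf, hfs⟩
    obtain ⟨Q, hQ, hQe⟩ := exists_isClosed_image_snd_eq_of_isGδ hG (isLindelof_range he.continuous)
    have hmem : ∀ q : Q, q.1.2 ∈ range e := fun q => hQe ▸ mem_image_of_mem _ q.2
    refine ⟨K, inferInstance, Q, fun q => f (he.toHomeomorph.symm ⟨q.1.2, hmem q⟩),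
      inferInstance, inferInstance, hQ, by fun_prop, fun x => ?_⟩
    obtain ⟨p, rfl⟩ := hfs x
    obtain ⟨z, hz, hzp⟩ : e p ∈ Prod.snd '' Q := hQe ▸ mem_range_self p
    exact ⟨⟨z, hz⟩, congrArg f (he.toHomeomorph.symm_apply_eq.2 (Subtype.ext hzp))⟩
  · rintro ⟨K, _, Q, f, _, _, hQ, hf, hfs⟩
    have : LindelofSpace ((ℕ → ℕ) × K) :=
      lindelofSpace_of_isClosedMap isClosedMap_fst_of_compactSpace fun s =>
        (isProperMap_fst_of_compactSpace.isCompact_preimage isCompact_singleton).isLindelof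
    exact ⟨Q, inferInstance, f, isLindelof_iff_lindelofSpace.1 hQ.isLindelof,
      (isCechComplete_baire_prod K).of_isClosedEmbedding hQ.isClosedEmbedding_subtypeVal, hf, hfs⟩

theorem exists_isSigmaCompact_superset_of_isKAnalytic {X : Type u} [TopologicalSpace X]
    (hX : IsKAnalytic X) {A : Set X} (hA : #A < lift.{u} boundingNumber) :
    ∃ T, IsSigmaCompact T ∧ A ⊆ T := by
  obtain ⟨K, _, Q, f, _, _, hQ, hf, hfs⟩ := isKAnalytic_iff_exists_isClosed.1 hX
  choose r hr using hfs
  have hproper : IsProperMap fun q : Q => q.1.1 := isProperMap_fst_of_compactSpace.restrict hQ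
  obtain ⟨T, hT, hAT⟩ := exists_isSigmaCompact_superset_of_mk_lt_boundingNumber
    (A := (fun a => (r a).1.1) '' A)
    (lift_lt.{_, u}.1 (mk_image_le_lift.trans_lt (by rwa [lift_id'])))
  refine ⟨_, (isSigmaCompact_preimage_of_isProperMap hproper hT).image hf, fun a ha => ?_⟩
  exact ⟨r a, hAT (mem_image_of_mem _ ha), hr a⟩

/-! ### Analyticity from countable separation -/

/-- A countable form of the Hausdorff axiom: countably many pairs of disjoint open sets suffice to
separate the points of `X`. -/
def HasCountableOpenSeparation (X : Type*) [TopologicalSpace X] : Prop :=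
  ∃ S : Set (Set X × Set X), S.Countable ∧
    (∀ s ∈ S, IsOpen s.1 ∧ IsOpen s.2 ∧ Disjoint s.1 s.2) ∧
    ∀ x y, x ≠ y → ∃ s ∈ S, x ∈ s.1 ∧ y ∈ s.2

theorem hasCountableOpenSeparation_of_isLindelof {X : Type*} [TopologicalSpace X] [T2Space X]
    (hX : IsLindelof (diagonal X)ᶜ) : HasCountableOpenSeparation X := by
  let 𝒮 : Set (Set X × Set X) := {s | IsOpen s.1 ∧ IsOpen s.2 ∧ Disjoint s.1 s.2}
  obtain ⟨S, hS, hScov⟩ := hX.elim_countable_subcover (fun s : 𝒮 => s.1.1 ×ˢ s.1.2)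
    (fun s => s.2.1.prod s.2.2.1) fun p hp => by
      obtain ⟨U, V, hU, hV, hpU, hpV, hUV⟩ := t2_separation hp
      exact mem_iUnion.2 ⟨⟨(U, V), hU, hV, hUV⟩, hpU, hpV⟩
  refine ⟨Subtype.val '' S, hS.image _, ?_, fun x y hxy => ?_⟩
  · rintro _ ⟨s, -, rfl⟩
    exact s.2
  · obtain ⟨s, hs, hxs, hys⟩ := mem_iUnion₂.1 (hScov (show (x, y) ∈ (diagonal X)ᶜ from hxy))
    exact ⟨s, mem_image_of_mem _ hs, hxs, hys⟩

theorem isAnalyticSpace_of_isClosedMap {Q Z X : Type u} [TopologicalSpace Q] [TopologicalSpace Z]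
    [PolishSpace Z] [TopologicalSpace X] {g : Q → Z} (hg : Continuous g) (hgc : IsClosedMap g)
    {f : Q → X} (hf : Continuous f) (hfs : Function.Surjective f)
    (hfg : Function.FactorsThrough f g) : IsAnalyticSpace X := by
  have hq : IsQuotientMap (rangeFactorization g) :=
    (hgc.codRestrict _).isQuotientMap hg.rangeFactorization rangeFactorization_surjective
  have hfq : Function.FactorsThrough (⟨f, hf⟩ : C(Q, X)) (⟨_, hq.continuous⟩ : C(Q, range g)) :=
    fun a b hab => hfg (congrArg Subtype.val hab)
  let F : C(range g, X) := IsQuotientMap.lift (f := ⟨_, hq.continuous⟩) hq ⟨f, hf⟩ hfq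
  refine ⟨range g, inferInstance, hgc.isClosed_range.polishSpace, F, F.continuous, fun x => ?_⟩
  obtain ⟨q, rfl⟩ := hfs x
  exact ⟨rangeFactorization g q, DFunLike.congr_fun (IsQuotientMap.lift_comp hq ⟨f, hf⟩ hfq) q⟩

theorem isAnalyticSpace_of_hasCountableOpenSeparation {X : Type u} [TopologicalSpace X]
    (hX : IsKAnalytic X) (hsep : HasCountableOpenSeparation X) : IsAnalyticSpace X := by
  obtain ⟨K, _, Q, f, _, _, hQ, hf, hfs⟩ := isKAnalytic_iff_exists_isClosed.1 hX
  obtain ⟨S, hS, hSo, hSsep⟩ := hsep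
  have := hS.to_subtype
  let R : Set (Q × (S → Bool)) :=
    {w | ∀ s, (w.2 s = true → f w.1 ∉ s.1.1) ∧ (w.2 s = false → f w.1 ∉ s.1.2)}
  have hR : IsClosed R := by
    have hcoord : ∀ (s : S) b, IsOpen {w : Q × (S → Bool) | w.2 s = b} := fun s b =>
      (isOpen_discrete ({b} : Set Bool)).preimage
        (show Continuous fun w : Q × (S → Bool) => w.2 s by fun_prop)
    have havoid : ∀ {U : Set X}, IsOpen U → IsClosed {w : Q × (S → Bool) | f w.1 ∉ U} :=
      fun hU => hU.isClosed_compl.preimage (hf.comp continuous_fst)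
    simp only [R, ofPred_forall, ofPred_and]
    exact isClosed_iInter fun s => (isClosed_imp (hcoord s true) (havoid (hSo s s.2).1)).inter
      (isClosed_imp (hcoord s false) (havoid (hSo s s.2).2.1))
  have hproper : IsProperMap fun w : R => (w.1.1.1.1, w.1.2) :=
    ((isProperMap_fst_of_compactSpace.restrict hQ).prodMap isProperMap_id).restrict hR
  have : PolishSpace ((ℕ → ℕ) × (S → Bool)) := ⟨⟩
  refine isAnalyticSpace_of_isClosedMap hproper.continuous hproper.isClosedMap
    (f := fun w : R => f w.1.1) (hf.comp (continuous_fst.comp continuous_subtype_val)) ?_ ?_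
  · classical
    intro x
    obtain ⟨q, rfl⟩ := hfs x
    refine ⟨⟨(q, fun s => decide (f q ∉ s.1.1)), fun s => ⟨by simp, fun hs => ?_⟩⟩, rfl⟩
    exact (hSo s s.2).2.2.notMem_of_mem_left (by simpa using hs)
  · intro v w hvw
    have hε : v.1.2 = w.1.2 := (Prod.ext_iff.1 hvw).2
    by_contra hne
    obtain ⟨s, hs, hvs, hws⟩ := hSsep _ _ hne
    cases hb : v.1.2 ⟨s, hs⟩ with
    | true => exact (v.2 ⟨s, hs⟩).1 hb hvs
    | false => exact (w.2 ⟨s, hs⟩).2 (hε ▸ hb) hws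

theorem isAnalyticSpace_of_aleph_one_lt_boundingNumber (h : ℵ₁ < boundingNumber) {X : Type u}
    [TopologicalSpace X] [T2Space X] (hX : IsKAnalytic X)
    (hmet : ∀ K : Set X, IsCompact K → TopologicalSpace.MetrizableSpace K) :
    IsAnalyticSpace X := by
  have hcov : ∀ A : Set X, #A ≤ ℵ₁ → ∃ T, IsSigmaCompact T ∧ A ⊆ T := fun A hA =>
    exists_isSigmaCompact_superset_of_isKAnalytic hX (hA.trans_lt (aleph_one_lt_lift.2 h))
  have := hereditarilyLindelofSpace_prod_self hmet hcov
  exact isAnalyticSpace_of_hasCountableOpenSeparation hX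
    (hasCountableOpenSeparation_of_isLindelof (HereditarilyLindelofSpace.isLindelof _))

/-! ### Adjoining a limit point to a filter -/

/-- The space of isolated points `pt i`, for `i : I`, and one further point `lim`, a set containing
`lim` being open when it contains `pt i` for `L`-almost all `i`. The filter is a parameter of the
type so that the topology can be an instance. -/
inductive AddLimit {I : Type*} (L : Filter I)
  | lim : AddLimit L
  | pt (i : I) : AddLimit L

namespace AddLimit

variable {I : Type*} {L : Filter I}

instance : TopologicalSpace (AddLimit L) := nhdsAdjoint lim (L.map pt)

theorem isOpen_iff {U : Set (AddLimit L)} : IsOpen U ↔ (lim ∈ U → pt ⁻¹' U ∈ L) := Iff.rfl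

theorem pt_injective : Function.Injective (pt : I → AddLimit L) := fun _ _ => pt.inj

theorem isOpen_singleton_pt (i : I) : IsOpen ({pt i} : Set (AddLimit L)) :=
  isOpen_singleton_nhdsAdjoint _ (by simp)

theorem isClosed_image_pt {A : Set I} (hA : Aᶜ ∈ L) :
    IsClosed ((pt : I → AddLimit L) '' A) := by
  rw [← isOpen_compl_iff, isOpen_iff, preimage_compl, preimage_image_eq A pt_injective]
  exact fun _ => hA

theorem finite_of_forall_pt_mem_of_isCompact {K : Set (AddLimit L)} (hK : IsCompact K) {A : Set I}
    (hA : Aᶜ ∈ L) (hAK : ∀ i ∈ A, pt i ∈ K) : A.Finite := by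
  have hcompact : IsCompact ((pt : I → AddLimit L) '' A) :=
    hK.of_isClosed_subset (isClosed_image_pt hA) (image_subset_iff.2 hAK)
  have hdiscrete : DiscreteTopology ((pt : I → AddLimit L) '' A) := by
    refine discreteTopology_subtype_iff'.2 ?_
    rintro _ ⟨i, hi, rfl⟩
    exact ⟨{pt i}, isOpen_singleton_pt i, inter_eq_left.2 (by simpa using hi)⟩
  exact (hcompact.finite ⟨hdiscrete⟩).of_finite_image pt_injective.injOn

theorem not_isAnalyticSpace [Uncountable I] : ¬ IsAnalyticSpace (AddLimit L) := by
  rintro ⟨P, _, _, f, hf, hfs⟩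
  refine not_countable (α := I) (Pairwise.countable_of_isOpen_disjoint
    (s := fun i => f ⁻¹' {pt i}) (fun i j hij => ?_)
    (fun i => (isOpen_singleton_pt i).preimage hf) fun i => hfs (pt i))
  exact Disjoint.preimage f (disjoint_singleton.2 (pt_injective.ne hij))

theorem exists_boolIndicator_ne {p q : AddLimit L} (hpq : p ≠ q) :
    ∃ i, (p = pt i ∨ q = pt i) ∧
      boolIndicator ({pt i} : Set (AddLimit L)) p ≠ boolIndicator {pt i} q := by
  cases p with
  | pt i => exact ⟨i, .inl rfl, by simp [boolIndicator, hpq.symm]⟩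
  | lim =>
    cases q with
    | pt j => exact ⟨j, .inr rfl, by simp [boolIndicator]⟩
    | lim => exact (hpq rfl).elim

theorem continuous_boolIndicator_singleton_pt (hL : L ≤ cofinite) (i : I) :
    Continuous ({pt i} : Set (AddLimit L)).boolIndicator := by
  refine (continuous_boolIndicator_iff_isClopen _).2 ⟨?_, isOpen_singleton_pt i⟩
  simpa using isClosed_image_pt (hL (finite_singleton i).compl_mem_cofinite)

theorem t2Space (hL : L ≤ cofinite) : T2Space (AddLimit L) := by
  refine .of_injective_continuous
    (f := fun (p : AddLimit L) (i : I) => ({pt i} : Set (AddLimit L)).boolIndicator p)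
    (fun p q hpq => ?_) (continuous_pi (continuous_boolIndicator_singleton_pt hL))
  by_contra hne
  obtain ⟨i, -, hi⟩ := exists_boolIndicator_ne hne
  exact hi (congrFun hpq i)

theorem metrizableSpace_of_isCompact (hL : L ≤ cofinite) {K : Set (AddLimit L)}
    (hK : IsCompact K) (hcount : (pt ⁻¹' K).Countable) : TopologicalSpace.MetrizableSpace K := by
  have := hcount.to_subtype
  have := isCompact_iff_compactSpace.1 hK
  let φ : K → pt ⁻¹' K → Bool := fun p i => ({pt i.1} : Set (AddLimit L)).boolIndicator p
  have hφ : Continuous φ := continuous_pi fun i =>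
    (continuous_boolIndicator_singleton_pt hL i.1).comp continuous_subtype_val
  refine (hφ.isClosedEmbedding fun p q hpq => ?_).isEmbedding.metrizableSpace
  by_contra hne
  obtain ⟨i, hi, hne'⟩ := exists_boolIndicator_ne (Subtype.coe_injective.ne hne)
  have hiK : pt i ∈ K := hi.elim (fun h => h ▸ p.2) fun h => h ▸ q.2
  exact hne' (congrFun hpq ⟨i, hiK⟩)

end AddLimit

/-- The filter of all sets of indices outside which the family `x` is locally finite. It is encoded
as the supremum over `z` of the filters expressing that `x i → z` along distinct indices `i`. -/
def colocallyFinite {I Z : Type*} [TopologicalSpace Z] (x : I → Z) : Filter I :=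
  ⨆ z, comap x (𝓝 z) ⊓ cofinite

section ColocallyFinite

variable {I Z : Type*} [TopologicalSpace Z] {x : I → Z}

theorem mem_colocallyFinite_iff {A : Set I} :
    A ∈ colocallyFinite x ↔ ∀ z, ∃ O ∈ 𝓝 z, (x ⁻¹' O \ A).Finite := by
  simp only [colocallyFinite, mem_iSup, mem_inf_iff_superset, mem_comap]
  refine forall_congr' fun z => ⟨?_, ?_⟩
  · rintro ⟨V, ⟨O, hO, hOV⟩, W, hW, hVW⟩
    exact ⟨O, hO, (mem_cofinite.1 hW).subset fun i hi hiW => hi.2 (hVW ⟨hOV hi.1, hiW⟩)⟩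
  · rintro ⟨O, hO, hfin⟩
    exact ⟨_, ⟨O, hO, Subset.rfl⟩, _, hfin.compl_mem_cofinite,
      fun i hi => by_contra fun hiA => hi.2 ⟨hi.1, hiA⟩⟩

theorem colocallyFinite_le_cofinite : colocallyFinite x ≤ cofinite :=
  iSup_le fun _ => inf_le_right

open AddLimit

theorem finite_image_of_isCompact_addLimit {M : Type*} [TopologicalSpace M] [DiscreteTopology M]
    {g : Z → M} (hg : Continuous g) {K : Set (AddLimit (colocallyFinite x))} (hK : IsCompact K) :
    ((fun i => g (x i)) '' (pt ⁻¹' K)).Finite := by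
  obtain ⟨D, hDK, hD⟩ := exists_subset_bijOn (pt ⁻¹' K) fun i => g (x i)
  have hDL : Dᶜ ∈ colocallyFinite x := mem_colocallyFinite_iff.2 fun z => by
    refine ⟨g ⁻¹' {g z}, ((isOpen_discrete _).preimage hg).mem_nhds rfl,
      Set.Subsingleton.finite fun i hi j hj => ?_⟩
    exact hD.injOn (not_not.1 hi.2) (not_not.1 hj.2) (hi.1.trans hj.1.symm)
  exact hD.image_eq ▸ (finite_of_forall_pt_mem_of_isCompact hK hDL hDK).image _

theorem bddAbove_image_of_isCompact_addLimit {x : I → ℕ → ℕ}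
    {K : Set (AddLimit (colocallyFinite x))} (hK : IsCompact K) :
    BddAbove (x '' (pt ⁻¹' K)) := by
  refine bddAbove_pi.2 fun n => ?_
  rw [image_image]
  exact (finite_image_of_isCompact_addLimit (continuous_apply n) hK).bddAbove

/-- The graph of `x` together with a copy of `Z` over the point at infinity of `OnePoint I`. This
closed set parametrizes the space `AddLimit (colocallyFinite x)`. -/
def graphAtInfty (x : I → Z) : Set (Z × OnePoint I) :=
  {w | ∀ i : I, w.2 = i → w.1 = x i}

variable [TopologicalSpace I] [DiscreteTopology I]

theorem isOpen_singleton_coe_onePoint_s12 (i : I) : IsOpen {(i : OnePoint I)} := by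
  rw [← image_singleton, OnePoint.isOpen_image_coe]
  exact isOpen_discrete _

theorem isClosed_graphAtInfty [T1Space Z] : IsClosed (graphAtInfty x) := by
  simp only [graphAtInfty, ofPred_forall]
  exact isClosed_iInter fun i => isClosed_imp
    ((isOpen_singleton_coe_onePoint_s12 i).preimage continuous_snd)
    (isClosed_singleton.preimage continuous_fst)

theorem continuous_graphAtInfty_elim :
    Continuous fun w : graphAtInfty x =>
      (w.1.2.elim lim pt : AddLimit (colocallyFinite x)) := by
  refine continuous_def.2 fun U hU => isOpen_iff_mem_nhds.2 ?_
  have hfst : Continuous fun w : graphAtInfty x => w.1.1 := by fun_prop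
  have hsnd : Continuous fun w : graphAtInfty x => w.1.2 := by fun_prop
  rintro ⟨⟨z, q⟩, hq⟩ hqU
  induction q using OnePoint.rec with
  | infty =>
    obtain ⟨O, hO, hfin⟩ := mem_colocallyFinite_iff.1 (AddLimit.isOpen_iff.1 hU hqU) z
    have hE := (hfin.image ((↑) : I → OnePoint I)).isClosed.isOpen_compl
    filter_upwards [hfst.continuousAt.preimage_mem_nhds hO,
      (hE.preimage hsnd).mem_nhds (by simp)]
    rintro ⟨⟨t, r⟩, hw⟩ hwO hwE
    induction r using OnePoint.rec with
    | infty => exact hqU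
    | coe j =>
      obtain rfl : t = x j := hw j rfl
      exact by_contra fun hj => hwE ⟨j, ⟨hwO, hj⟩, rfl⟩
  | coe i =>
    filter_upwards [((isOpen_singleton_coe_onePoint_s12 i).preimage hsnd).mem_nhds rfl]
    rintro ⟨⟨t, r⟩, hw⟩ rfl
    exact hqU

end ColocallyFinite

theorem isKAnalytic_addLimit_colocallyFinite {I : Type u} (x : I → ℕ → ℕ) :
    IsKAnalytic (AddLimit (colocallyFinite x)) := by
  let _ : TopologicalSpace I := ⊥
  have : DiscreteTopology I := ⟨rfl⟩
  refine isKAnalytic_iff_exists_isClosed.2 ⟨OnePoint I, inferInstance, graphAtInfty x, _,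
    inferInstance, inferInstance, isClosed_graphAtInfty, continuous_graphAtInfty_elim, ?_⟩
  rintro (_ | i)
  · exact ⟨⟨(0, OnePoint.infty), fun i hi => (OnePoint.infty_ne_coe i hi).elim⟩, rfl⟩
  · exact ⟨⟨(x i, i), fun j hj => by rw [OnePoint.coe_injective hj]⟩, rfl⟩

theorem stmt12 :
    Cardinal.aleph 1 < boundingNumber ↔
      ∀ (X : Type u) (_ : TopologicalSpace X), T2Space X → IsKAnalytic X →
        (∀ K : Set X, IsCompact K → TopologicalSpace.MetrizableSpace ↥K) →
        IsAnalyticSpace X := by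
  refine ⟨fun h X _ _ hX hmet => isAnalyticSpace_of_aleph_one_lt_boundingNumber h hX hmet,
    fun h => ?_⟩
  by_contra! hle
  obtain ⟨I, x, _, hx⟩ := exists_uncountable_forall_countable_setOf_le.{u} hle
  refine AddLimit.not_isAnalyticSpace (h (AddLimit (colocallyFinite x)) inferInstance
    (AddLimit.t2Space colocallyFinite_le_cofinite) (isKAnalytic_addLimit_colocallyFinite x)
    fun K hK => ?_)
  obtain ⟨y, hy⟩ := bddAbove_image_of_isCompact_addLimit hK
  exact AddLimit.metrizableSpace_of_isCompact colocallyFinite_le_cofinite hK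
    ((hx y).mono fun i hi => hy (mem_image_of_mem x hi))
end
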